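/- arXiv:2401.02273 — 3 statements merged into one kernel-verified Lean document; each statement's English description precedes it below -/
import Mathlib

section
/- For every integer d ≥ 2 there exist a nonempty finite alphabet A and a nonempty subshift X ⊆ A^{ℤ^d} (a nonempty closed shift-invariant subset of the full shift) which is strongly irreducible with some gap g ≥ 0 and which contains no periodic point (no point of X has a finite orbit under the shift ℤ^d-action). -/
/-- Euclidean distance between two sites of `ℤ^d`. -/
noncomputable def edistZd (d : ℕ) (u v : Fin d → ℤ) : ℝ :=
  Real.sqrt (∑ i, ((u i - v i : ℤ) : ℝ) ^ 2)

/-- The shift `ℤ^d`-action on the full shift: `(σ_v x)_u = x_{u+v}`. -/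
def shiftZd {d : ℕ} {A : Type*} (v : Fin d → ℤ) (x : (Fin d → ℤ) → A) :
    (Fin d → ℤ) → A := fun u => x (u + v)

/-- The product topology on the full shift `A^{ℤ^d}`, with `A` discrete. -/
def fullShiftTopZd (d : ℕ) (A : Type*) : TopologicalSpace ((Fin d → ℤ) → A) :=
  @Pi.topologicalSpace (Fin d → ℤ) (fun _ => A) (fun _ => ⊥)

/-!
Fix an irrational `θ` and two independent directions. The subshift consists of the integer
configurations obtained from the constant density `θ` by a flow `(a, b)` with values in `[0, 1]`,
i.e. of the form `θ + div (a, b)`. The total of such a configuration over a large box differs from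
`θ` times the volume only by a boundary term, so its mean is `θ`, which no periodic configuration
achieves. For gluing, reduce flows modulo 1: there, yielding an integer configuration just means
having divergence `-θ`, so two flows differ by a divergence-free one. As the two directions are
independent, this difference is the curl of a stream function, and cutting the stream function off
outside a set interpolates between the two flows.
-/

open Finset
open scoped fwdDiff Pointwise

theorem sum_range_mul_of_periodic {M : Type*} [AddCommMonoid M] {f : ℕ → M} {n : ℕ}
    (hf : Function.Periodic f n) (N : ℕ) :
    ∑ k ∈ range (N * n), f k = N • ∑ k ∈ range n, f k := by
  induction N with
  | zero => simp
  | succ N ih =>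
    have shift_block : ∀ k, f (N * n + k) = f k := fun k ↦ by
      rw [add_comm]
      exact hf.nat_mul N k
    simp only [add_mul, one_mul, sum_range_add, ih, shift_block, succ_nsmul]

theorem sum_range_sum_range_mul_of_periodic {M : Type*} [AddCommMonoid M] {f : ℕ → ℕ → M} {m n : ℕ}
    (hm : Function.Periodic f m) (hn : ∀ k, Function.Periodic (f k) n) (N : ℕ) :
    ∑ k ∈ range (N * m), ∑ l ∈ range (N * n), f k l =
      N • N • ∑ k ∈ range m, ∑ l ∈ range n, f k l := by
  have rows_periodic : Function.Periodic (fun k ↦ ∑ l ∈ range (N * n), f k l) m :=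
    fun k ↦ by simp only [hm k]
  rw [sum_range_mul_of_periodic rows_periodic]
  simp only [sum_range_mul_of_periodic (hn _), sum_nsmul]

section ForwardDifference

variable {V M : Type*} [AddCommMonoid V] [AddCommGroup M]

theorem fwdDiff_neg (e : V) (f : V → M) : Δ_[e] (-f) = -Δ_[e] f := by
  ext u
  simp only [fwdDiff, Pi.neg_apply]
  abel

theorem fwdDiff_comm (e₁ e₂ : V) (f : V → M) :
    Δ_[e₁] (Δ_[e₂] f) = Δ_[e₂] (Δ_[e₁] f) := by
  ext u
  simp only [fwdDiff, add_right_comm u e₁ e₂]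
  abel

theorem fwdDiff_eq_zero_iff {e : V} {f : V → M} :
    Δ_[e] f = 0 ↔ Function.Periodic f e := by
  simp only [funext_iff, fwdDiff, Pi.zero_apply, sub_eq_zero, Function.Periodic]

theorem sum_range_fwdDiff_nsmul (e : V) (f : V → M) (u : V) (n : ℕ) :
    ∑ k ∈ range n, Δ_[e] f (u + k • e) = f (u + n • e) - f u := by
  simpa [fwdDiff, succ_nsmul, add_assoc] using sum_range_sub (fun k ↦ f (u + k • e)) n

end ForwardDifference

section Divergence

variable {V M : Type*} [AddCommMonoid V] [AddCommGroup M] {e₁ e₂ : V}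

/-- The discrete divergence of the flow on `V` whose component along `e₁` is `a` and whose component
along `e₂` is `b`. -/
def planarDivergence (e₁ e₂ : V) (a b : V → M) : V → M :=
  Δ_[e₁] a + Δ_[e₂] b

theorem planarDivergence_add (a a' b b' : V → M) :
    planarDivergence e₁ e₂ (a + a') (b + b') =
      planarDivergence e₁ e₂ a b + planarDivergence e₁ e₂ a' b' := by
  simp only [planarDivergence, fwdDiff_add]
  abel

theorem planarDivergence_sub (a a' b b' : V → M) :
    planarDivergence e₁ e₂ (a - a') (b - b') =
      planarDivergence e₁ e₂ a b - planarDivergence e₁ e₂ a' b' := by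
  simp only [planarDivergence, sub_eq_add_neg, fwdDiff_add, fwdDiff_neg]
  abel

theorem planarDivergence_fwdDiff_neg (H : V → M) :
    planarDivergence e₁ e₂ (Δ_[e₂] H) (Δ_[e₁] (-H)) = 0 := by
  rw [planarDivergence, fwdDiff_neg, fwdDiff_neg, fwdDiff_comm, add_neg_cancel]

theorem abs_sum_range_planarDivergence_le {a b : V → ℝ} (ha : ∀ u, a u ∈ unitInterval)
    (hb : ∀ u, b u ∈ unitInterval) (u : V) (m n : ℕ) :
    |∑ k ∈ range m, ∑ l ∈ range n, planarDivergence e₁ e₂ a b (u + k • e₁ + l • e₂)| ≤ m + n := by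
  have flux_eq : ∑ k ∈ range m, ∑ l ∈ range n, planarDivergence e₁ e₂ a b (u + k • e₁ + l • e₂) =
      ∑ l ∈ range n, (a (u + l • e₂ + m • e₁) - a (u + l • e₂)) +
        ∑ k ∈ range m, (b (u + k • e₁ + n • e₂) - b (u + k • e₁)) := by
    simp only [planarDivergence, Pi.add_apply, sum_add_distrib, sum_range_fwdDiff_nsmul]
    rw [sum_comm]
    simp only [add_right_comm u (_ • e₁) (_ • e₂), sum_range_fwdDiff_nsmul]
  have abs_sum_le : ∀ (N : ℕ) (f g : ℕ → ℝ), (∀ k, f k ∈ unitInterval) →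
      (∀ k, g k ∈ unitInterval) → |∑ k ∈ range N, (f k - g k)| ≤ N := fun N f g hf hg ↦ calc
    |∑ k ∈ range N, (f k - g k)| ≤ ∑ k ∈ range N, |f k - g k| := abs_sum_le_sum_abs _ _
    _ ≤ ∑ k ∈ range N, 1 := sum_le_sum fun k _ ↦ by
      simpa using abs_sub_le_of_le_of_le (hf k).1 (hf k).2 (hg k).1 (hg k).2
    _ = N := by simp
  rw [flux_eq, add_comm (m : ℝ)]
  exact (abs_add_le _ _).trans <| add_le_add
    (abs_sum_le n _ _ (fun _ ↦ ha _) fun _ ↦ ha _) (abs_sum_le m _ _ (fun _ ↦ hb _) fun _ ↦ hb _)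

end Divergence

section StreamFunction

variable {ι M : Type*} [DecidableEq ι] [AddCommGroup M]

theorem exists_fwdDiff_one_eq (f : ℤ → M) : ∃ F : ℤ → M, Δ_[1] F = f := by
  refine ⟨fun n ↦ ∑ k ∈ Ico 0 n, f k - ∑ k ∈ Ico n 0, f k, funext fun n ↦ ?_⟩
  rcases le_or_gt 0 n with hn | hn
  · have h_insert : Ico 0 (n + 1) = insert n (Ico 0 n) := by grind
    simp [fwdDiff, h_insert, Ico_eq_empty_of_le hn, Ico_eq_empty_of_le (hn.trans (lt_add_one n).le)]
  · have h_insert : Ico n 0 = insert n (Ico (n + 1) 0) := by grind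
    simp [fwdDiff, h_insert, Ico_eq_empty_of_le hn.le, Ico_eq_empty_of_le (Int.add_one_le_of_lt hn)]

theorem exists_fwdDiff_single_eq (i : ι) (f : (ι → ℤ) → M) :
    ∃ F : (ι → ℤ) → M, Δ_[Pi.single i 1] F = f ∧
      ∀ v : ι → ℤ, v i = 0 → Function.Periodic f v → Function.Periodic F v := by
  choose antidiff h_antidiff using exists_fwdDiff_one_eq (M := M)
  refine ⟨fun u ↦ antidiff (fun n ↦ f (Function.update u i n)) (u i), funext fun u ↦ ?_,
    fun v hv hf u ↦ ?_⟩
  · have update_add : ∀ n, Function.update (u + Pi.single i 1) i n = Function.update u i n :=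
      fun n ↦ by ext k; by_cases hk : k = i <;> simp [hk]
    simpa [fwdDiff, update_add] using
      congrFun (h_antidiff fun n ↦ f (Function.update u i n)) (u i)
  · have update_add : ∀ n, Function.update (u + v) i n = Function.update u i n + v :=
      fun n ↦ by ext k; by_cases hk : k = i <;> simp [hk, hv]
    simp [update_add, hf _, hv]

theorem exists_streamFunction {i j : ι} (hij : i ≠ j) {p q : (ι → ℤ) → M}
    (hpq : planarDivergence (Pi.single i 1) (Pi.single j 1) p q = 0) :
    ∃ H : (ι → ℤ) → M, Δ_[Pi.single j 1] H = p ∧ Δ_[Pi.single i 1] (-H) = q := by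
  obtain ⟨P, hP, -⟩ := exists_fwdDiff_single_eq j p
  let r : (ι → ℤ) → M := q + Δ_[Pi.single i 1] P
  have hr : Function.Periodic r (Pi.single j 1) := fwdDiff_eq_zero_iff.mp <| by
    rw [fwdDiff_add, fwdDiff_comm, hP, add_comm]
    exact hpq
  obtain ⟨R, hR, R_periodic⟩ := exists_fwdDiff_single_eq i r
  have hRj : Δ_[Pi.single j 1] R = 0 :=
    fwdDiff_eq_zero_iff.mpr <| R_periodic _ (by simp [hij]) hr
  refine ⟨P - R, ?_, ?_⟩
  · rw [sub_eq_add_neg, fwdDiff_add, fwdDiff_neg, hP, hRj, neg_zero, add_zero]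
  · rw [neg_sub, sub_eq_add_neg, fwdDiff_add, fwdDiff_neg, hR, add_neg_cancel_right]

end StreamFunction

section Circle

variable {V : Type*}

/-- The reduction modulo `1` of a function with values in `[0, 1]`. -/
def modOne (a : V → unitInterval) : V → UnitAddCircle :=
  fun v ↦ ((a v : ℝ) : UnitAddCircle)

theorem exists_unitInterval_coe_eq (t : UnitAddCircle) :
    ∃ s : unitInterval, ((s : ℝ) : UnitAddCircle) = t := by
  obtain ⟨s, hs, rfl⟩ := (AddCircle.coe_image_Icc_eq (1 : ℝ) 0).ge (Set.mem_univ t)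
  exact ⟨⟨s, by simpa using hs⟩, rfl⟩

theorem modOne_surjective : Function.Surjective (modOne (V := V)) :=
  Function.Surjective.comp_left exists_unitInterval_coe_eq

theorem exists_modOne_eq_add_fwdDiff_indicator [AddCommMonoid V] {e : V} {H : V → UnitAddCircle}
    {a a' : V → unitInterval} (h : modOne a' = modOne a + Δ_[e] H) (S : Set V) :
    ∃ c : V → unitInterval, modOne c = modOne a + Δ_[e] (S.indicator H) ∧
      (∀ u ∉ S, u + e ∉ S → c u = a u) ∧ ∀ u ∈ S, u + e ∈ S → c u = a' u := by
  classical
  obtain ⟨t, ht⟩ := modOne_surjective (modOne a + Δ_[e] (S.indicator H))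
  refine ⟨fun u ↦ if u ∉ S ∧ u + e ∉ S then a u else if u ∈ S ∧ u + e ∈ S then a' u else t u,
    funext fun u ↦ ?_, fun u hu hue ↦ by simp [hu, hue], fun u hu hue ↦ by simp [hu, hue]⟩
  simp only [modOne, Pi.add_apply, funext_iff] at h ht ⊢
  split_ifs with h_out h_in
  · simp [fwdDiff, h_out]
  · simpa [fwdDiff, h_in] using h u
  · exact ht u

end Circle

section FlowSubshift

variable {V : Type*} [AddCommMonoid V] {θ : ℝ} {e₁ e₂ : V}

/-- The integers at distance at most `2` from `θ`: the possible integer values of `θ` plus the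
divergence of a flow with values in `[0, 1]`. It serves as the alphabet of `flowSubshift`. -/
abbrev IntegersNear (θ : ℝ) : Type :=
  Set.Icc ⌈θ - 2⌉ ⌊θ + 2⌋

/-- The flow `(a, b)` transports the constant density `θ` to the integer configuration `x`. -/
def Transports (θ : ℝ) (e₁ e₂ : V) (a b : V → unitInterval) (x : V → IntegersNear θ) : Prop :=
  ∀ u, ((x u : ℤ) : ℝ) =
    θ + planarDivergence e₁ e₂ (fun v ↦ (a v : ℝ)) (fun v ↦ (b v : ℝ)) u

/-- The set of integer configurations to which some flow with values in `[0, 1]` transports the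
constant density `θ`. The closed interval, rather than `[0, 1)`, makes this set closed. -/
def flowSubshift (θ : ℝ) (e₁ e₂ : V) : Set (V → IntegersNear θ) :=
  {x | ∃ a b, Transports θ e₁ e₂ a b x}

theorem exists_transports_iff {a b : V → unitInterval} :
    (∃ x, Transports θ e₁ e₂ a b x) ↔
      planarDivergence e₁ e₂ (modOne a) (modOne b) = fun _ ↦ -(θ : UnitAddCircle) := by
  let div : V → ℝ := planarDivergence e₁ e₂ (fun v ↦ (a v : ℝ)) (fun v ↦ (b v : ℝ))
  have integral_iff : ∀ u, (∃ m : IntegersNear θ, ((m : ℤ) : ℝ) = θ + div u) ↔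
      ((div u : ℝ) : UnitAddCircle) = -(θ : UnitAddCircle) := fun u ↦ by
    have div_mem : -2 ≤ div u ∧ div u ≤ 2 := by
      simp only [div, planarDivergence, fwdDiff, Pi.add_apply]
      constructor <;> linarith [(a u).2.1, (a u).2.2, (b u).2.1, (b u).2.2,
        (a (u + e₁)).2.1, (a (u + e₁)).2.2, (b (u + e₂)).2.1, (b (u + e₂)).2.2]
    rw [← add_eq_zero_iff_eq_neg', ← AddCircle.coe_add, AddCircle.coe_eq_zero_iff]
    simp only [zsmul_eq_mul, mul_one]
    refine ⟨fun ⟨m, hm⟩ ↦ ⟨m, hm⟩, fun ⟨m, hm⟩ ↦ ⟨⟨m, ?_, ?_⟩, hm⟩⟩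
    · exact Int.ceil_le.mpr (by linarith)
    · exact Int.le_floor.mpr (by linarith)
  rw [funext_iff]
  exact Classical.skolem.symm.trans (forall_congr' integral_iff)

theorem Transports.eq_of_flow_eq {a b c c' : V → unitInterval} {x z : V → IntegersNear θ}
    (hz : Transports θ e₁ e₂ c c' z) (hx : Transports θ e₁ e₂ a b x) {u : V} (ha : c u = a u)
    (ha₁ : c (u + e₁) = a (u + e₁)) (hb : c' u = b u) (hb₂ : c' (u + e₂) = b (u + e₂)) :
    z u = x u :=
  Subtype.ext <| Int.cast_injective (α := ℝ) <| by
    simp only [hz u, hx u, planarDivergence, fwdDiff, Pi.add_apply, ha, ha₁, hb, hb₂]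

theorem flowSubshift_comp_add_right {x : V → IntegersNear θ} (hx : x ∈ flowSubshift θ e₁ e₂)
    (v : V) : (fun u ↦ x (u + v)) ∈ flowSubshift θ e₁ e₂ := by
  obtain ⟨a, b, h⟩ := hx
  refine ⟨fun u ↦ a (u + v), fun u ↦ b (u + v), fun u ↦ ?_⟩
  simpa only [planarDivergence, fwdDiff, Pi.add_apply, add_right_comm u _ v] using h (u + v)

theorem isClosed_flowSubshift : IsClosed (flowSubshift θ e₁ e₂) := by
  let K : Set ((V → IntegersNear θ) × (V → unitInterval) × (V → unitInterval)) :=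
    {t | Transports θ e₁ e₂ t.2.1 t.2.2 t.1}
  have isClosed_K : IsClosed K := by
    simp only [K, Transports, planarDivergence, fwdDiff, Pi.add_apply, Set.ofPred_forall]
    exact isClosed_iInter fun u ↦ isClosed_eq (by fun_prop) (by fun_prop)
  have image_K : Prod.fst '' K = flowSubshift θ e₁ e₂ := by
    ext x
    simp [K, flowSubshift]
  exact image_K ▸ isClosedMap_fst_of_compactSpace K isClosed_K

theorem flowSubshift_nonempty {χ : V →+ UnitAddCircle} (hχ : χ e₁ = -θ) :
    (flowSubshift θ e₁ e₂).Nonempty := by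
  obtain ⟨a, ha⟩ := modOne_surjective (χ : V → UnitAddCircle)
  obtain ⟨b, hb⟩ := modOne_surjective (0 : V → UnitAddCircle)
  obtain ⟨x, hx⟩ := exists_transports_iff.mpr <|
    show planarDivergence e₁ e₂ (modOne a) (modOne b) = fun _ ↦ -(θ : UnitAddCircle) by
      ext u
      simp [planarDivergence, fwdDiff, ha, hb, hχ]
  exact ⟨x, a, b, hx⟩

theorem sum_range_eq_of_mem_flowSubshift {x : V → IntegersNear θ}
    (hx : x ∈ flowSubshift θ e₁ e₂) {m n : ℕ} (hm : Function.Periodic x (m • e₁))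
    (hn : Function.Periodic x (n • e₂)) :
    ∑ k ∈ range m, ∑ l ∈ range n, ((x (k • e₁ + l • e₂) : ℤ) : ℝ) = m * n * θ := by
  obtain ⟨a, b, hab⟩ := hx
  let excess : ℕ → ℕ → ℝ := fun k l ↦ (x (k • e₁ + l • e₂) : ℤ) - θ
  let total : ℝ := ∑ k ∈ range m, ∑ l ∈ range n, excess k l
  have excess_periodic_left : Function.Periodic excess m := fun k ↦ funext fun l ↦ by
    simp only [excess, add_nsmul, add_right_comm _ (m • e₁), hm _]
  have excess_periodic_right : ∀ k, Function.Periodic (excess k) n := fun k l ↦ by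
    simp only [excess, add_nsmul, ← add_assoc, hn _]
  have excess_eq : ∀ k l, excess k l = planarDivergence e₁ e₂ (fun v ↦ (a v : ℝ))
      (fun v ↦ (b v : ℝ)) (0 + k • e₁ + l • e₂) := fun k l ↦ by simp [excess, hab _]
  have abs_total_le : ∀ N : ℕ, N * (N * |total|) ≤ N * (m + n) := fun N ↦ calc
    N * (N * |total|) = |∑ k ∈ range (N * m), ∑ l ∈ range (N * n), excess k l| := by
      rw [sum_range_sum_range_mul_of_periodic excess_periodic_left excess_periodic_right]
      simp [total, abs_mul]
    _ ≤ N * (m + n) := by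
      simpa [excess_eq, mul_add] using
        abs_sum_range_planarDivergence_le (fun v ↦ (a v).2) (fun v ↦ (b v).2) 0 (N * m) (N * n)
  have total_eq_zero : total = 0 := by
    by_contra h_ne
    have total_pos : 0 < |total| := abs_pos.mpr h_ne
    obtain ⟨N, hN⟩ := exists_nat_gt (((m : ℝ) + n) / |total|)
    have N_pos : (0 : ℝ) < N := lt_of_le_of_lt (by positivity) hN
    exact ((div_lt_iff₀ total_pos).mp hN).not_ge (le_of_mul_le_mul_left (abs_total_le N) N_pos)
  simp only [total, excess, sum_sub_distrib, sum_const, card_range, nsmul_eq_mul] at total_eq_zero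
  linarith

theorem not_periodic_of_mem_flowSubshift (hθ : Irrational θ) {x : V → IntegersNear θ}
    (hx : x ∈ flowSubshift θ e₁ e₂) {m n : ℕ} (hm₀ : m ≠ 0) (hn₀ : n ≠ 0)
    (hm : Function.Periodic x (m • e₁)) : ¬ Function.Periodic x (n • e₂) := fun hn ↦ by
  have sum_eq := sum_range_eq_of_mem_flowSubshift hx hm hn
  have h_irrational := hθ.natCast_mul (mul_ne_zero hm₀ hn₀)
  rw [Nat.cast_mul, ← sum_eq] at h_irrational
  exact h_irrational.ne_int (∑ k ∈ range m, ∑ l ∈ range n, (x (k • e₁ + l • e₂) : ℤ)) (by simp)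

end FlowSubshift

section Gluing

variable {ι : Type*} [DecidableEq ι] {θ : ℝ} {i j : ι}

/-- The unit square spanned by the directions `i` and `j`. The divergence at `u` of the curl of a
function involves the values of that function on the translate of this square by `u`. -/
def unitSquare (i j : ι) : Set (ι → ℤ) :=
  Set.Icc 0 (Pi.single i 1 + Pi.single j 1)

theorem corners_of_forall_mem_unitSquare {P : (ι → ℤ) → Prop} {u : ι → ℤ}
    (h : ∀ w ∈ unitSquare i j, P (u + w)) :
    P u ∧ P (u + Pi.single i 1) ∧ P (u + Pi.single j 1) ∧
      P (u + Pi.single i 1 + Pi.single j 1) := by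
  have hi : (0 : ι → ℤ) ≤ Pi.single i 1 := by simp
  have hj : (0 : ι → ℤ) ≤ Pi.single j 1 := by simp
  refine ⟨?_, h _ ⟨hi, le_add_of_nonneg_right hj⟩, h _ ⟨hj, le_add_of_nonneg_left hi⟩, ?_⟩
  · simpa using h 0 ⟨le_rfl, add_nonneg hi hj⟩
  · simpa [add_assoc] using h _ ⟨add_nonneg hi hj, le_rfl⟩

theorem exists_glue_of_mem_flowSubshift (hij : i ≠ j) {x y : (ι → ℤ) → IntegersNear θ}
    (hx : x ∈ flowSubshift θ (Pi.single i 1) (Pi.single j 1))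
    (hy : y ∈ flowSubshift θ (Pi.single i 1) (Pi.single j 1)) (S : Set (ι → ℤ)) :
    ∃ z ∈ flowSubshift θ (Pi.single i 1) (Pi.single j 1),
      (∀ u, (∀ w ∈ unitSquare i j, u + w ∉ S) → z u = x u) ∧
      ∀ u, (∀ w ∈ unitSquare i j, u + w ∈ S) → z u = y u := by
  obtain ⟨a, b, hab⟩ := hx
  obtain ⟨a', b', hab'⟩ := hy
  have div_ab := exists_transports_iff.mp ⟨x, hab⟩
  have div_ab' := exists_transports_iff.mp ⟨y, hab'⟩
  obtain ⟨H, hHa, hHb⟩ := exists_streamFunction hij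
    (p := modOne a' - modOne a) (q := modOne b' - modOne b) (by
      rw [planarDivergence_sub, div_ab, div_ab', sub_self])
  obtain ⟨c, hc, c_out, c_in⟩ := exists_modOne_eq_add_fwdDiff_indicator
    (eq_add_of_sub_eq' hHa.symm) S
  obtain ⟨c', hc', c'_out, c'_in⟩ := exists_modOne_eq_add_fwdDiff_indicator
    (eq_add_of_sub_eq' hHb.symm) S
  obtain ⟨z, hz⟩ : ∃ z, Transports θ (Pi.single i 1) (Pi.single j 1) c c' z := by
    rw [exists_transports_iff, hc, hc', planarDivergence_add, Set.indicator_neg',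
      planarDivergence_fwdDiff_neg, add_zero, div_ab]
  refine ⟨z, ⟨c, c', hz⟩, fun u hu ↦ ?_, fun u hu ↦ ?_⟩
  · obtain ⟨h, hi, hj, h_corner⟩ := corners_of_forall_mem_unitSquare (P := (· ∉ S)) hu
    exact hz.eq_of_flow_eq hab (c_out _ h hj) (c_out _ hi h_corner) (c'_out _ h hi)
      (c'_out _ hj (add_right_comm u _ _ ▸ h_corner))
  · obtain ⟨h, hi, hj, h_corner⟩ := corners_of_forall_mem_unitSquare (P := (· ∈ S)) hu
    exact hz.eq_of_flow_eq hab' (c_in _ h hj) (c_in _ hi h_corner) (c'_in _ h hi)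
      (c'_in _ hj (add_right_comm u _ _ ▸ h_corner))

end Gluing

section FullShift

variable {d : ℕ}

theorem fullShiftTopZd_eq_pi (A : Type*) [TopologicalSpace A] [DiscreteTopology A] :
    fullShiftTopZd d A = Pi.topologicalSpace := by
  rw [fullShiftTopZd, DiscreteTopology.eq_bot (α := A)]

theorem exists_periodic_nsmul_of_finite_range_shiftZd {A : Type*} {x : (Fin d → ℤ) → A}
    (hx : (Set.range fun v ↦ shiftZd v x).Finite) (v : Fin d → ℤ) :
    ∃ n : ℕ, n ≠ 0 ∧ Function.Periodic x (n • v) := by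
  obtain ⟨k, l, hkl, shift_eq⟩ := hx.exists_lt_map_eq_of_forall_mem
    (f := fun k : ℕ ↦ shiftZd (k • v) x) fun k ↦ Set.mem_range_self (k • v)
  refine ⟨l - k, Nat.sub_ne_zero_of_lt hkl, fun u ↦ ?_⟩
  calc
    x (u + (l - k) • v) = shiftZd (l • v) x (u - k • v) := by
      rw [shiftZd, sub_nsmul v hkl.le]
      congr 1
      abel
    _ = shiftZd (k • v) x (u - k • v) := (congrFun shift_eq _).symm
    _ = x u := by rw [shiftZd, sub_add_cancel]

theorem edistZd_le_sqrt_two {i j : Fin d} (hij : i ≠ j) {u v w w' : Fin d → ℤ}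
    (hw : w ∈ unitSquare i j) (hw' : w' ∈ unitSquare i j) (h : u + w = v + w') :
    edistZd d u v ≤ √2 := by
  let s : Fin d → ℤ := Pi.single i 1 + Pi.single j 1
  have sq_le : ∀ k, (u k - v k) ^ 2 ≤ s k := fun k ↦ by
    have s_sq : s k ^ 2 = s k := by
      simp only [s, Pi.add_apply, Pi.single_apply]
      grind
    have sub_eq : u k - v k = w' k - w k := by
      have := congrFun h k
      simp only [Pi.add_apply] at this
      linarith
    have bounds : ∀ t ∈ unitSquare i j, 0 ≤ t k ∧ t k ≤ s k := fun t ht ↦ ⟨ht.1 k, ht.2 k⟩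
    rw [sub_eq, ← s_sq]
    exact sq_le_sq' (by linarith [bounds w hw, bounds w' hw'])
      (by linarith [bounds w hw, bounds w' hw'])
  have sum_sq_le : ∑ k, (u k - v k) ^ 2 ≤ 2 :=
    (sum_le_sum fun k _ ↦ sq_le k).trans (by simp [s, sum_add_distrib])
  exact Real.sqrt_le_sqrt (by exact_mod_cast sum_sq_le)

theorem exists_glue_flowSubshift_of_sqrt_two_lt_edistZd {θ : ℝ} {i j : Fin d} (hij : i ≠ j)
    {E F : Set (Fin d → ℤ)} (hEF : ∀ u ∈ E, ∀ v ∈ F, √2 < edistZd d u v)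
    {x y : (Fin d → ℤ) → IntegersNear θ}
    (hx : x ∈ flowSubshift θ (Pi.single i 1) (Pi.single j 1))
    (hy : y ∈ flowSubshift θ (Pi.single i 1) (Pi.single j 1)) :
    ∃ z ∈ flowSubshift θ (Pi.single i 1) (Pi.single j 1),
      (∀ u ∈ E, z u = x u) ∧ ∀ u ∈ F, z u = y u := by
  obtain ⟨z, hz, z_out, z_in⟩ := exists_glue_of_mem_flowSubshift hij hx hy (F + unitSquare i j)
  refine ⟨z, hz, fun u hu ↦ z_out u ?_, fun u hu ↦ z_in u fun w hw ↦ Set.add_mem_add hu hw⟩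
  rintro w hw ⟨v, hv, w', hw', h⟩
  exact (hEF u hu v hv).not_ge (edistZd_le_sqrt_two hij hw hw' h.symm)

theorem infinite_range_shiftZd_of_mem_flowSubshift {θ : ℝ} (hθ : Irrational θ)
    {e₁ e₂ : Fin d → ℤ} {x : (Fin d → ℤ) → IntegersNear θ} (hx : x ∈ flowSubshift θ e₁ e₂) :
    (Set.range fun v ↦ shiftZd v x).Infinite := fun h_finite ↦ by
  obtain ⟨m, hm₀, hm⟩ := exists_periodic_nsmul_of_finite_range_shiftZd h_finite e₁
  obtain ⟨n, hn₀, hn⟩ := exists_periodic_nsmul_of_finite_range_shiftZd h_finite e₂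
  exact not_periodic_of_mem_flowSubshift hθ hx hm₀ hn₀ hm hn

end FullShift

/-- For every `d ≥ 2` there exist a nonempty finite alphabet `A` and a nonempty
subshift `X ⊆ A^{ℤ^d}` that is strongly irreducible with some gap `g ≥ 0` and
contains no periodic point. -/
theorem exists_SI_aperiodic_subshift (d : ℕ) (hd : 2 ≤ d) :
    ∃ (A : Type) (_ : Fintype A) (_ : Nonempty A)
      (X : Set ((Fin d → ℤ) → A)) (g : ℝ),
      0 ≤ g ∧
      -- `X` is a nonempty closed shift-invariant set
      X.Nonempty ∧
      @IsClosed _ (fullShiftTopZd d A) X ∧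
      (∀ v : Fin d → ℤ, ∀ x ∈ X, shiftZd v x ∈ X) ∧
      -- `X` is strongly irreducible with gap `g`
      (∀ E F : Set (Fin d → ℤ),
        (∀ u ∈ E, ∀ v ∈ F, edistZd d u v > g) →
        ∀ x ∈ X, ∀ y ∈ X,
          ∃ z ∈ X, (∀ u ∈ E, z u = x u) ∧ (∀ u ∈ F, z u = y u)) ∧
      -- `X` has no periodic point
      (∀ x ∈ X, ¬ (Set.range fun v : Fin d → ℤ => shiftZd v x).Finite) := by
  have : Nontrivial (Fin d) := Fin.nontrivial_iff_two_le.mpr hd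
  obtain ⟨i, j, hij⟩ := exists_pair_ne (Fin d)
  let X := flowSubshift √2 (Pi.single i 1 : Fin d → ℤ) (Pi.single j 1)
  let χ : (Fin d → ℤ) →+ UnitAddCircle :=
    (zmultiplesHom UnitAddCircle (-(√2 : ℝ))).comp (Pi.evalAddMonoidHom _ i)
  have X_nonempty : X.Nonempty := flowSubshift_nonempty (χ := χ) (by simp [χ])
  refine ⟨IntegersNear √2, inferInstance, X_nonempty.to_type.map (· 0), X, √2, Real.sqrt_nonneg 2,
    X_nonempty, ?_, fun v x hx ↦ flowSubshift_comp_add_right hx v, ?_, ?_⟩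
  · rw [fullShiftTopZd_eq_pi]
    exact isClosed_flowSubshift
  · intro E F hEF x hx y hy
    exact exists_glue_flowSubshift_of_sqrt_two_lt_edistZd hij hEF hx hy
  · exact fun x hx ↦ infinite_range_shiftZd_of_mem_flowSubshift irrational_sqrt_two hx
end

section
/- There exists a sequence (R_n)_{n≥1} of positive integers with R_n → ∞ such that, for the alphabet A = {0,1}, the set X_{(R_n)} ⊆ {0,1}^{ℤ²} is nonempty (and is a closed shift-invariant set), but for every g ≥ 0 the set X_{(R_n)} is not strongly irreducible with gap g. -/
/-- Euclidean distance between two sites of `ℤ²`. -/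
noncomputable def edistZ2 (u v : ℤ × ℤ) : ℝ :=
  Real.sqrt (((u.1 - v.1 : ℤ) : ℝ) ^ 2 + ((u.2 - v.2 : ℤ) : ℝ) ^ 2)

/-- The shift `ℤ²`-action on the full shift: `(σ_v x)_u = x_{u+v}`. -/
def shiftZ2 {A : Type*} (v : ℤ × ℤ) (x : ℤ × ℤ → A) : ℤ × ℤ → A :=
  fun u => x (u + v)

/-- The product topology on the full shift `A^{ℤ²}`, with `A` discrete. -/
def fullShiftTopZ2 (A : Type*) : TopologicalSpace (ℤ × ℤ → A) :=
  @Pi.topologicalSpace (ℤ × ℤ) (fun _ => A) (fun _ => ⊥)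

/-- `(u,v)` is an `n`-aperiodic pair for `x`: `u ≡ v (mod n)` coordinatewise
and `x_u ≠ x_v`. -/
def IsAperiodicPair {A : Type*} (n : ℕ) (x : ℤ × ℤ → A) (u v : ℤ × ℤ) : Prop :=
  (n : ℤ) ∣ (u.1 - v.1) ∧ (n : ℤ) ∣ (u.2 - v.2) ∧ x u ≠ x v

/-- The subshift `X_{(R_n)}`: all configurations `x ∈ {0,1}^{ℤ²}` such that
for every `n ≥ 1` and all `a, b ∈ ℤ`, the square `[a, a+R_n] × [b, b+R_n]`
contains an `n`-aperiodic pair for `x`. -/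
def XR (R : ℕ → ℕ) : Set (ℤ × ℤ → Bool) :=
  {x | ∀ n : ℕ, 1 ≤ n → ∀ a b : ℤ, ∃ u v : ℤ × ℤ,
    a ≤ u.1 ∧ u.1 ≤ a + R n ∧ b ≤ u.2 ∧ u.2 ≤ b + R n ∧
    a ≤ v.1 ∧ v.1 ≤ a + R n ∧ b ≤ v.2 ∧ v.2 ≤ b + R n ∧
    IsAperiodicPair n x u v}

/-!
Take `R n = lcm 2 n` and the configuration whose column `i` displays the binary digit of the row
number at position `ν₂(i) + 1`. Adding an even `m > 0` to the row number flips the digit at position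
`ν₂(m) ≥ 1`, and some column in every window of length `m` displays it; with `m = lcm 2 n` this
gives an `n`-aperiodic pair in every square of side `R n`.

Suppose that a configuration `z` of `X_{(R_n)}` agrees with this one on the rows `≤ 0` and with its
mirror image on the rows `≥ h`. All odd columns of the original configuration coincide, so two odd
columns of `z` can only differ in the `h - 1` rows in between; by pigeonhole two of them coincide,
at an even distance `m` which can be taken with `m / 2 ≥ h`. The rows `± m / 2` of `z` coincide by
the mirror symmetry. So the square of side `m = R m` between these columns and rows has equal
opposite sides, whereas an `m`-aperiodic pair in it would have to lie on opposite sides.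
-/

/-- The sites of the lattice square of side length `r` whose lower left corner is `c`,
that is, the window `[a, a + r] × [b, b + r]` of `XR` for `c = (a, b)`. -/
def latticeSquare (c : ℤ × ℤ) (r : ℕ) : Set (ℤ × ℤ) :=
  Set.Icc c.1 (c.1 + r) ×ˢ Set.Icc c.2 (c.2 + r)

/-- The mirror image of a configuration in the horizontal axis, the second of the two
configurations that cannot be glued. -/
def reflectZ2 {A : Type*} (x : ℤ × ℤ → A) : ℤ × ℤ → A :=
  fun u => x (u.1, -u.2)

section XR

variable {R : ℕ → ℕ} {x : ℤ × ℤ → Bool}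

lemma mem_XR_iff :
    x ∈ XR R ↔ ∀ n, 1 ≤ n → ∀ c, ∃ u ∈ latticeSquare c (R n), ∃ v ∈ latticeSquare c (R n),
      IsAperiodicPair n x u v := by
  simp only [XR, latticeSquare, Set.mem_ofPred_eq, Set.mem_prod, Set.mem_Icc, Prod.forall,
    Prod.exists, and_assoc, exists_and_left]

lemma isClosed_setOf_isAperiodicPair (n : ℕ) (u v : ℤ × ℤ) :
    IsClosed {x : ℤ × ℤ → Bool | IsAperiodicPair n x u v} := by
  have hcont : Continuous fun x : ℤ × ℤ → Bool => (x u, x v) := by fun_prop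
  have hne : IsClosed {x : ℤ × ℤ → Bool | x u ≠ x v} :=
    (isClosed_discrete {q : Bool × Bool | q.1 ≠ q.2}).preimage hcont
  exact isClosed_const.and (isClosed_const.and hne)

lemma finite_latticeSquare (c : ℤ × ℤ) (r : ℕ) : (latticeSquare c r).Finite :=
  (Set.finite_Icc _ _).prod (Set.finite_Icc _ _)

lemma isClosed_XR (R : ℕ → ℕ) : IsClosed (XR R) := by
  have hXR : XR R = ⋂ (n : ℕ) (_ : 1 ≤ n) (c : ℤ × ℤ), ⋃ u ∈ latticeSquare c (R n),
      ⋃ v ∈ latticeSquare c (R n), {x | IsAperiodicPair n x u v} := by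
    ext x
    simp only [mem_XR_iff, Set.mem_iInter, Set.mem_iUnion, Set.mem_ofPred_eq, exists_prop]
  rw [hXR]
  exact isClosed_iInter fun n => isClosed_iInter fun _ => isClosed_iInter fun c =>
    (finite_latticeSquare c (R n)).isClosed_biUnion fun u _ =>
      (finite_latticeSquare c (R n)).isClosed_biUnion fun v _ =>
        isClosed_setOf_isAperiodicPair n u v

lemma shiftZ2_mem_XR (w : ℤ × ℤ) (hx : x ∈ XR R) : shiftZ2 w x ∈ XR R := by
  rw [mem_XR_iff] at hx ⊢
  intro n hn c
  obtain ⟨u, hu, v, hv, huv⟩ := hx n hn (c + w)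
  have sub_mem {s : ℤ × ℤ} (hs : s ∈ latticeSquare (c + w) (R n)) :
      s - w ∈ latticeSquare c (R n) := by
    simp only [latticeSquare, Set.mem_prod, Set.mem_Icc, Prod.fst_add, Prod.snd_add,
      Prod.fst_sub, Prod.snd_sub] at hs ⊢
    omega
  exact ⟨u - w, sub_mem hu, v - w, sub_mem hv, by simpa [IsAperiodicPair, shiftZ2] using huv⟩

lemma reflectZ2_mem_XR (hx : x ∈ XR R) : reflectZ2 x ∈ XR R := by
  rw [mem_XR_iff] at hx ⊢
  intro n hn c
  obtain ⟨u, hu, v, hv, hdvd₁, hdvd₂, hne⟩ := hx n hn (c.1, -c.2 - R n)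
  have reflect_mem {s : ℤ × ℤ} (hs : s ∈ latticeSquare (c.1, -c.2 - R n) (R n)) :
      (s.1, -s.2) ∈ latticeSquare c (R n) := by
    simp only [latticeSquare, Set.mem_prod, Set.mem_Icc] at hs ⊢
    omega
  refine ⟨(u.1, -u.2), reflect_mem hu, (v.1, -v.2), reflect_mem hv, hdvd₁, ?_, ?_⟩
  · simpa only [neg_sub_neg] using dvd_sub_comm.1 hdvd₂
  · simpa only [reflectZ2, neg_neg] using hne

end XR

section DigitConfig

/-- The configuration whose column `i` displays the binary digit of the row number `j` at position
`ν₂(i) + 1`; it witnesses that `XR (Nat.lcm 2)` is nonempty. Position `0` is skipped so that the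
digit at position `p` is displayed by the columns of one residue class modulo `2 ^ p`. Floor
division reads off the digits of negative `j` as well, in two's complement. In column `0`, where
`ν₂` is infinite, `multiplicity 2 0 = 1` makes an arbitrary choice. -/
noncomputable def digitConfig : ℤ × ℤ → Bool :=
  fun u => decide (Odd (u.2 / 2 ^ (multiplicity 2 u.1 + 1)))

lemma exists_mem_Ico_multiplicity_eq {q : ℤ} (hq : 1 < q) (a : ℤ) (k : ℕ) :
    ∃ i ∈ Set.Ico a (a + q ^ (k + 1)), multiplicity q i = k := by
  have hpos : 0 < q ^ (k + 1) := by positivity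
  have hlt : q ^ k < q ^ (k + 1) := pow_lt_pow_right₀ hq k.lt_succ_self
  have hdvd : q ^ (k + 1) ∣ q ^ k - toIcoMod hpos a (q ^ k) := by
    rw [self_sub_toIcoMod, smul_eq_mul]
    exact dvd_mul_left _ _
  refine ⟨toIcoMod hpos a (q ^ k), toIcoMod_mem_Ico hpos a _,
    multiplicity_eq_of_dvd_of_not_dvd ?_ fun h => ?_⟩
  · exact (dvd_sub_right dvd_rfl).1 ((pow_dvd_pow q k.le_succ).trans hdvd)
  · exact hlt.not_ge (Int.le_of_dvd (by positivity) ((dvd_sub_left h).1 hdvd))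

lemma odd_add_ediv_two_pow_multiplicity_iff {m : ℤ} (hm : m ≠ 0) (j : ℤ) :
    Odd ((j + m) / 2 ^ multiplicity 2 m) ↔ ¬ Odd (j / 2 ^ multiplicity 2 m) := by
  have hfin : FiniteMultiplicity 2 m := Int.finiteMultiplicity_iff.2 ⟨by decide, hm⟩
  obtain ⟨c, hmc, hc⟩ := hfin.exists_eq_pow_mul_and_not_dvd
  have hdiv : (j + m) / 2 ^ multiplicity 2 m = j / 2 ^ multiplicity 2 m + c := by
    rw [← Int.add_mul_ediv_left j c (by positivity), ← hmc]
  have hodd : ¬ Even c := by rwa [even_iff_two_dvd]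
  rw [hdiv, Int.odd_add, iff_false_right hodd]

lemma digitConfig_add_ne {i m : ℤ} (hm : m ≠ 0) (him : multiplicity 2 m = multiplicity 2 i + 1)
    (j : ℤ) : digitConfig (i, j + m) ≠ digitConfig (i, j) := by
  simp only [digitConfig, ← him, odd_add_ediv_two_pow_multiplicity_iff hm, ne_eq, decide_eq_decide,
    not_iff_self, not_false_eq_true]

lemma digitConfig_eq_of_odd {i i' : ℤ} (hi : Odd i) (hi' : Odd i') (j : ℤ) :
    digitConfig (i, j) = digitConfig (i', j) := by
  have multiplicity_of_odd {k : ℤ} (hk : Odd k) : multiplicity 2 k = 0 :=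
    multiplicity_eq_zero.2 (by rwa [← even_iff_two_dvd, Int.not_even_iff_odd])
  simp only [digitConfig, multiplicity_of_odd hi, multiplicity_of_odd hi']

lemma digitConfig_mem_XR : digitConfig ∈ XR (Nat.lcm 2) := by
  rw [mem_XR_iff]
  intro n hn c
  set m : ℕ := Nat.lcm 2 n
  have hm : (m : ℤ) ≠ 0 := by
    exact_mod_cast Nat.lcm_ne_zero two_ne_zero (Nat.one_le_iff_ne_zero.1 hn)
  have hnm : (n : ℤ) ∣ m := by exact_mod_cast Nat.dvd_lcm_right 2 n
  have h2m : (2 : ℤ) ∣ m := by exact_mod_cast Nat.dvd_lcm_left 2 n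
  obtain ⟨p, hp⟩ : ∃ p, multiplicity 2 (m : ℤ) = p + 1 :=
    Nat.exists_eq_add_one_of_ne_zero fun h => multiplicity_eq_zero.1 h h2m
  have hpm : (2 : ℤ) ^ (p + 1) ≤ m := Int.le_of_dvd (by omega) (hp ▸ pow_multiplicity_dvd 2 _)
  obtain ⟨i, ⟨hai, hib⟩, hi⟩ := exists_mem_Ico_multiplicity_eq one_lt_two c.1 p
  refine ⟨(i, c.2 + m), ?_, (i, c.2), ?_, ?_, ?_, digitConfig_add_ne hm (by rw [hp, hi]) c.2⟩
  · simp only [latticeSquare, Set.mem_prod, Set.mem_Icc]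
    omega
  · simp only [latticeSquare, Set.mem_prod, Set.mem_Icc]
    omega
  · simp
  · simpa using hnm

end DigitConfig

section Obstruction

lemma apply_eq_of_mem_Icc_of_dvd_sub {α : Type*} {f : ℤ → α} {a m s t : ℤ}
    (hf : f a = f (a + m)) (hs : s ∈ Set.Icc a (a + m)) (ht : t ∈ Set.Icc a (a + m))
    (hst : m ∣ s - t) : f s = f t := by
  wlog hle : s ≤ t generalizing s t
  · exact (this ht hs (dvd_sub_comm.1 hst) (le_of_not_ge hle)).symm
  obtain rfl | hlt := hle.eq_or_lt
  · rfl
  have hmst : m ≤ t - s := Int.le_of_dvd (by omega) (dvd_sub_comm.1 hst)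
  obtain ⟨rfl, rfl⟩ : s = a ∧ t = a + m := by
    simp only [Set.mem_Icc] at hs ht
    omega
  exact hf

lemma notMem_XR_of_opposite_sides_eq {R : ℕ → ℕ} {z : ℤ × ℤ → Bool} {m : ℕ} (hm : 1 ≤ m)
    (hRm : R m ≤ m) {c : ℤ × ℤ} (hcol : ∀ t, z (c.1, t) = z (c.1 + m, t))
    (hrow : ∀ s, z (s, c.2) = z (s, c.2 + m)) : z ∉ XR R := by
  intro hz
  obtain ⟨u, hu, v, hv, hdvd₁, hdvd₂, hne⟩ := mem_XR_iff.1 hz m hm c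
  have hsub : latticeSquare c (R m) ⊆ latticeSquare c m := by
    unfold latticeSquare
    gcongr
  refine hne (?_ : z (u.1, u.2) = z (v.1, v.2))
  calc z (u.1, u.2)
    _ = z (v.1, u.2) :=
        apply_eq_of_mem_Icc_of_dvd_sub (f := fun s => z (s, u.2)) (hcol _) (hsub hu).1 (hsub hv).1
          hdvd₁
    _ = z (v.1, v.2) :=
        apply_eq_of_mem_Icc_of_dvd_sub (f := fun t => z (v.1, t)) (hrow _) (hsub hu).2 (hsub hv).2
          hdvd₂

lemma exists_lt_columns_eq {A : Type*} [Finite A] (z : ℤ × ℤ → A) (col : ℕ → ℤ) {T : Set ℤ}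
    (hT : T.Finite) : ∃ k l, k < l ∧ ∀ t ∈ T, z (col k, t) = z (col l, t) := by
  have := hT.to_subtype
  let word (k : ℕ) (t : T) : A := z (col k, t)
  obtain ⟨k, -, l, -, hkl, hword⟩ :=
    Set.infinite_univ.exists_lt_map_eq_of_mapsTo (Set.mapsTo_univ word _) Set.finite_univ
  exact ⟨k, l, hkl, fun t ht => congrFun hword ⟨t, ht⟩⟩

lemma notMem_XR_of_eq_reflectZ2 {R : ℕ → ℕ} (hR : ∀ n, Even n → R n ≤ n) {x z : ℤ × ℤ → Bool}
    (hx : ∀ ⦃i i' : ℤ⦄, Odd i → Odd i' → ∀ j, x (i, j) = x (i', j)) (h : ℕ)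
    (hlow : ∀ u : ℤ × ℤ, u.2 ≤ 0 → z u = x u)
    (hhigh : ∀ u : ℤ × ℤ, h ≤ u.2 → z u = reflectZ2 x u) : z ∉ XR R := by
  let col (k : ℕ) : ℤ := 2 * (k * (h + 1)) + 1
  have col_odd (k : ℕ) : Odd (col k) := odd_two_mul_add_one _
  obtain ⟨k, l, hkl, hmid⟩ := exists_lt_columns_eq z col (Set.finite_Ico 0 (h : ℤ))
  obtain ⟨d, rfl⟩ := Nat.exists_eq_add_of_lt hkl
  set b : ℕ := (d + 1) * (h + 1)
  have hhb : h ≤ b := h.le_succ.trans (Nat.le_mul_of_pos_left _ d.succ_pos)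
  have hb : 1 ≤ b := Nat.mul_pos d.succ_pos h.succ_pos
  have hcolb : col (k + d + 1) = col k + (2 * b : ℕ) := by
    simp only [col, b]
    push_cast
    ring
  refine notMem_XR_of_opposite_sides_eq (m := 2 * b) (c := (col k, -b)) (by omega)
    (hR _ (even_two_mul b)) (fun t => ?_) (fun s => ?_)
  · rw [← hcolb]
    rcases le_or_gt t 0 with ht | ht
    · rw [hlow _ ht, hlow _ ht, hx (col_odd _) (col_odd _)]
    rcases le_or_gt (h : ℤ) t with hht | hht
    · rw [hhigh _ hht, hhigh _ hht, reflectZ2, reflectZ2, hx (col_odd _) (col_odd _)]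
    · exact hmid t ⟨ht.le, hht⟩
  · have hend : -(b : ℤ) + (2 * b : ℕ) = b := by push_cast; ring
    rw [hend, hlow (s, -b) (by simp), hhigh (s, b) (by simpa using hhb), reflectZ2]

end Obstruction

lemma sub_snd_le_edistZ2 (u v : ℤ × ℤ) : ((v.2 - u.2 : ℤ) : ℝ) ≤ edistZ2 u v := by
  refine Real.le_sqrt_of_sq_le ?_
  rw [← neg_sub u.2 v.2, Int.cast_neg, neg_sq]
  exact le_add_of_nonneg_left (sq_nonneg _)

/-- There is a sequence `(R_n)` of positive integers tending to infinity such
that `X_{(R_n)} ⊆ {0,1}^{ℤ²}` is nonempty (and closed and shift-invariant),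
but for every `g ≥ 0` it is not strongly irreducible with gap `g`. -/
theorem exists_XR_nonempty_not_SI :
    ∃ R : ℕ → ℕ,
      (∀ n, 1 ≤ n → 1 ≤ R n) ∧
      Filter.Tendsto R Filter.atTop Filter.atTop ∧
      (XR R).Nonempty ∧
      @IsClosed _ (fullShiftTopZ2 Bool) (XR R) ∧
      (∀ v : ℤ × ℤ, ∀ x ∈ XR R, shiftZ2 v x ∈ XR R) ∧
      (∀ g : ℝ, 0 ≤ g →
        ¬ (∀ E F : Set (ℤ × ℤ),
            (∀ u ∈ E, ∀ v ∈ F, edistZ2 u v > g) →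
            ∀ x ∈ XR R, ∀ y ∈ XR R,
              ∃ z ∈ XR R, (∀ u ∈ E, z u = x u) ∧ (∀ u ∈ F, z u = y u))) := by
  have le_lcm : ∀ n, n ≤ Nat.lcm 2 n := fun n => Nat.le_lcm_right n two_pos
  have lcm_le (n : ℕ) (hn : Even n) : Nat.lcm 2 n ≤ n := (Nat.lcm_eq_right hn.two_dvd).le
  refine ⟨Nat.lcm 2, fun n hn => hn.trans (le_lcm n),
    Filter.tendsto_atTop_mono le_lcm Filter.tendsto_id, ⟨digitConfig, digitConfig_mem_XR⟩,
    isClosed_XR _, fun v x hx => shiftZ2_mem_XR v hx, fun g _ hglue => ?_⟩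
  obtain ⟨h, hgh⟩ := exists_nat_gt g
  have hdist (u : ℤ × ℤ) (hu : u.2 ≤ 0) (v : ℤ × ℤ) (hv : h ≤ v.2) : edistZ2 u v > g :=
    calc g < h := hgh
      _ ≤ ((v.2 - u.2 : ℤ) : ℝ) := by exact_mod_cast (by omega : (h : ℤ) ≤ v.2 - u.2)
      _ ≤ edistZ2 u v := sub_snd_le_edistZ2 u v
  obtain ⟨z, hz, hlow, hhigh⟩ := hglue {u | u.2 ≤ 0} {v | h ≤ v.2} hdist
    digitConfig digitConfig_mem_XR (reflectZ2 digitConfig) (reflectZ2_mem_XR digitConfig_mem_XR)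
  exact notMem_XR_of_eq_reflectZ2 lcm_le (fun _ _ => digitConfig_eq_of_odd) h hlow hhigh hz
end

section
/- For all integers k ≥ 1 and n ≥ 1, if n ≥ 2^k then the coin-and-bucket configuration c_{k,n} is unorientable: no finite sequence of legal moves starting from c_{k,n} reaches an oriented configuration. -/
/-- A coin-and-bucket configuration with `k` buckets: each bucket records its
number of heads-coins and its number of tails-coins. -/
def CBConfig (k : ℕ) := Fin k → ℕ × ℕ

/-- The number of coins of orientation `σ` (`true` = heads, `false` = tails)
in a bucket. -/
def coinCount (p : ℕ × ℕ) (σ : Bool) : ℕ := if σ then p.1 else p.2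

/-- Remove one coin of orientation `σ` from bucket `i`. -/
def removeCoin {k : ℕ} (c : CBConfig k) (i : Fin k) (σ : Bool) : CBConfig k :=
  Function.update c i (if σ then ((c i).1 - 1, (c i).2) else ((c i).1, (c i).2 - 1))

/-- Add one coin of orientation `σ` to bucket `j`. -/
def addCoin {k : ℕ} (c : CBConfig k) (j : Fin k) (σ : Bool) : CBConfig k :=
  Function.update c j (if σ then ((c j).1 + 1, (c j).2) else ((c j).1, (c j).2 + 1))

/-- A legal move: choose buckets `i, j` and an orientation `σ` such that bucket
`i` has a `σ`-coin; remove one `σ`-coin from `i` and add a coin of orientation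
`σ'` to `j`, where `σ'` must be the strictly less common orientation in bucket
`j` before the addition (free choice in case of a tie). -/
def CBMove {k : ℕ} (c c' : CBConfig k) : Prop :=
  ∃ (i j : Fin k) (σ σ' : Bool),
    1 ≤ coinCount (c i) σ ∧
    ((removeCoin c i σ j).1 < (removeCoin c i σ j).2 → σ' = true) ∧
    ((removeCoin c i σ j).2 < (removeCoin c i σ j).1 → σ' = false) ∧
    c' = addCoin (removeCoin c i σ) j σ'

/-- A configuration is oriented if every bucket contains coins of only one
orientation. -/
def CBOriented {k : ℕ} (c : CBConfig k) : Prop :=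
  ∀ i, (c i).1 = 0 ∨ (c i).2 = 0

/-- A configuration is orientable if a finite sequence of legal moves leads
from it to an oriented configuration. -/
def CBOrientable {k : ℕ} (c : CBConfig k) : Prop :=
  ∃ c', Relation.ReflTransGen CBMove c c' ∧ CBOriented c'

/-- The configuration `c_{k,n}`: bucket `1` contains `⌊n/2⌋` heads and
`⌈n/2⌉` tails, all other buckets are empty. -/
def cbInit (k n : ℕ) : CBConfig k :=
  fun i => if (i : ℕ) = 0 then (n / 2, n - n / 2) else (0, 0)

/-!
A legal move takes a coin out of a bucket, leaving a configuration `d`, and puts it back into `d`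
in the minority orientation of some bucket; undoing the move takes the latter coin out of `d` and
restores the former one. Fix a set `S` of buckets, and call *free* all coins of the buckets in `S`
together with the minority coins of the others. If `c` has at most `B` free coins, while every
bucket outside `S` has at least `B + 2` coins of one orientation, then the same holds before any
move leading to `c`: a tied bucket outside `S` would contain too many free coins, so that the coin
the move added is free, and taking it out makes room for the coin that is restored.

An oriented configuration with at least `2 ^ k` coins is of this kind: choose `S` maximal among the
sets of buckets holding fewer than `2 ^ #S` coins, and let `B` be the number of coins held by `S`.
Tracing the moves back, some bucket of the initial configuration has at least two more coins of one
orientation than there are free coins, which fails for `cbInit k n`.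
-/

open Finset

theorem exists_ssubset_sum_add_two_le {ι : Type*} {s : Finset ι} {a : ι → ℕ}
    (h : 2 ^ #s ≤ ∑ i ∈ s, a i) : ∃ t ⊂ s, ∀ i ∈ s, i ∉ t → ∑ j ∈ t, a j + 2 ≤ a i := by
  classical
  obtain ⟨t, ht⟩ := {t ∈ s.powerset | ∑ j ∈ t, a j < 2 ^ #t}.exists_maximal ⟨∅, by simp⟩
  obtain ⟨hts, hsum⟩ : t ⊆ s ∧ ∑ j ∈ t, a j < 2 ^ #t := by simpa using ht.prop
  refine ⟨t, hts.ssubset_of_ne (by rintro rfl; omega), fun i hi hit ↦ ?_⟩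
  have hinsert : 2 ^ #(insert i t) ≤ ∑ j ∈ insert i t, a j := by
    by_contra! hlt
    exact hit <| ht.le_of_ge (by simp [insert_subset hi hts, hlt]) (subset_insert i t)
      (mem_insert_self i t)
  rw [sum_insert hit, card_insert_of_notMem hit, pow_succ] at hinsert
  omega

namespace CBConfig

variable {k : ℕ} {S : Finset (Fin k)} {B : ℕ} {c d : CBConfig k} {p : ℕ × ℕ} {σ : Bool}

/-- The contents of a bucket with contents `p` after adding a coin of orientation `σ`. -/
def insertCoin (p : ℕ × ℕ) (σ : Bool) : ℕ × ℕ :=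
  if σ then (p.1 + 1, p.2) else (p.1, p.2 + 1)

/-- The orientations that a legal move may add to a bucket with contents `p`: the strictly less
common one, or any of the two in case of a tie. -/
def IsAdmissible (p : ℕ × ℕ) (σ : Bool) : Prop :=
  (p.1 < p.2 → σ = true) ∧ (p.2 < p.1 → σ = false)

theorem fst_add_snd_insertCoin (p : ℕ × ℕ) (σ : Bool) :
    (insertCoin p σ).1 + (insertCoin p σ).2 = p.1 + p.2 + 1 := by
  grind [insertCoin]

theorem min_insertCoin_le (p : ℕ × ℕ) (σ : Bool) :
    min (insertCoin p σ).1 (insertCoin p σ).2 ≤ min p.1 p.2 + 1 := by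
  grind [insertCoin]

theorem max_le_max_insertCoin (p : ℕ × ℕ) (σ : Bool) :
    max p.1 p.2 ≤ max (insertCoin p σ).1 (insertCoin p σ).2 := by
  grind [insertCoin]

theorem IsAdmissible.min_max_insertCoin_eq (hσ : IsAdmissible p σ)
    (h : min (insertCoin p σ).1 (insertCoin p σ).2 + 2 ≤
      max (insertCoin p σ).1 (insertCoin p σ).2) :
    min (insertCoin p σ).1 (insertCoin p σ).2 = min p.1 p.2 + 1 ∧
      max (insertCoin p σ).1 (insertCoin p σ).2 = max p.1 p.2 := by
  have hne : p.1 ≠ p.2 := by grind [insertCoin]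
  obtain hlt | hgt := hne.lt_or_gt
  · obtain rfl := hσ.1 hlt
    grind [insertCoin]
  · obtain rfl := hσ.2 hgt
    grind [insertCoin]

theorem addCoin_same (c : CBConfig k) (j : Fin k) (σ : Bool) :
    addCoin c j σ j = insertCoin (c j) σ :=
  Function.update_self ..

theorem addCoin_of_ne {i j : Fin k} (h : i ≠ j) (c : CBConfig k) (σ : Bool) :
    addCoin c j σ i = c i :=
  Function.update_of_ne h ..

theorem addCoin_removeCoin {i : Fin k} (h : 1 ≤ coinCount (c i) σ) :
    addCoin (removeCoin c i σ) i σ = c := by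
  funext x
  obtain rfl | hx := eq_or_ne x i
  · have hremove : removeCoin c x σ x = if σ then ((c x).1 - 1, (c x).2) else
      ((c x).1, (c x).2 - 1) := Function.update_self ..
    rw [addCoin_same, hremove]
    grind [insertCoin, coinCount]
  · exact (addCoin_of_ne hx _ σ).trans (Function.update_of_ne hx ..)

theorem sum_addCoin_add {M : Type*} [AddCommMonoid M] (w : Fin k → ℕ × ℕ → M) (c : CBConfig k)
    (j : Fin k) (σ : Bool) :
    ∑ i, w i (addCoin c j σ i) + w j (c j) = ∑ i, w i (c i) + w j (insertCoin (c j) σ) := by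
  have hcompl : ∑ i ∈ {j}ᶜ, w i (addCoin c j σ i) = ∑ i ∈ {j}ᶜ, w i (c i) :=
    sum_congr rfl fun i hi ↦ by rw [addCoin_of_ne (by simpa using hi)]
  rw [Fintype.sum_eq_add_sum_compl j, Fintype.sum_eq_add_sum_compl j (fun i ↦ w i (c i)),
    addCoin_same, hcompl]
  abel

theorem exists_addCoin_of_cbMove {c c' : CBConfig k} (h : CBMove c c') :
    ∃ d i σ j τ, IsAdmissible (d j) τ ∧ addCoin d i σ = c ∧ addCoin d j τ = c' := by
  obtain ⟨i, j, σ, τ, hcoin, hlt, hgt, rfl⟩ := h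
  exact ⟨removeCoin c i σ, i, σ, j, τ, ⟨hlt, hgt⟩, addCoin_removeCoin hcoin, rfl⟩

/-- The total number of coins. -/
def numCoins (c : CBConfig k) : ℕ :=
  ∑ i, ((c i).1 + (c i).2)

theorem numCoins_addCoin (c : CBConfig k) (j : Fin k) (σ : Bool) :
    numCoins (addCoin c j σ) = numCoins c + 1 := by
  have hsum := sum_addCoin_add (fun _ p ↦ p.1 + p.2) c j σ
  rw [fst_add_snd_insertCoin] at hsum
  unfold numCoins
  omega

theorem numCoins_eq_of_cbMove {c c' : CBConfig k} (h : CBMove c c') :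
    numCoins c = numCoins c' := by
  obtain ⟨d, i, σ, j, τ, -, rfl, rfl⟩ := exists_addCoin_of_cbMove h
  rw [numCoins_addCoin, numCoins_addCoin]

theorem numCoins_eq_of_reflTransGen {c c' : CBConfig k} (h : Relation.ReflTransGen CBMove c c') :
    numCoins c = numCoins c' := by
  induction h with
  | refl => rfl
  | tail _ hmove ih => exact ih.trans (numCoins_eq_of_cbMove hmove)

/-- The number of free coins of bucket `i` if its contents are `p`: all its coins are free if
`i ∈ S`, and only those of the less common orientation otherwise. -/
def freeCount (S : Finset (Fin k)) (i : Fin k) (p : ℕ × ℕ) : ℕ :=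
  if i ∈ S then p.1 + p.2 else min p.1 p.2

/-- The total number of free coins, with `S` the set of buckets in which all coins are free. -/
def freeCoins (S : Finset (Fin k)) (c : CBConfig k) : ℕ :=
  ∑ i, freeCount S i (c i)

theorem min_le_freeCount (S : Finset (Fin k)) (i : Fin k) (p : ℕ × ℕ) :
    min p.1 p.2 ≤ freeCount S i p := by
  grind [freeCount]

theorem freeCount_insertCoin_le (S : Finset (Fin k)) (i : Fin k) (p : ℕ × ℕ) (σ : Bool) :
    freeCount S i (insertCoin p σ) ≤ freeCount S i p + 1 := by
  grind [freeCount, fst_add_snd_insertCoin, min_insertCoin_le]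

theorem freeCount_le_freeCoins (S : Finset (Fin k)) (c : CBConfig k) (i : Fin k) :
    freeCount S i (c i) ≤ freeCoins S c :=
  single_le_sum_of_canonicallyOrdered (f := fun i ↦ freeCount S i (c i)) (mem_univ i)

theorem sum_min_le_freeCoins (S : Finset (Fin k)) (c : CBConfig k) :
    ∑ i, min (c i).1 (c i).2 ≤ freeCoins S c :=
  sum_le_sum fun i _ ↦ min_le_freeCount S i (c i)

theorem freeCoins_addCoin_add (S : Finset (Fin k)) (c : CBConfig k) (j : Fin k) (σ : Bool) :
    freeCoins S (addCoin c j σ) + freeCount S j (c j) =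
      freeCoins S c + freeCount S j (insertCoin (c j) σ) :=
  sum_addCoin_add (freeCount S) c j σ

theorem freeCoins_addCoin_le (S : Finset (Fin k)) (c : CBConfig k) (j : Fin k) (σ : Bool) :
    freeCoins S (addCoin c j σ) ≤ freeCoins S c + 1 := by
  have hsum := freeCoins_addCoin_add S c j σ
  have hle := freeCount_insertCoin_le S j (c j) σ
  omega

theorem freeCoins_of_cbOriented (hc : CBOriented c) (S : Finset (Fin k)) :
    freeCoins S c = ∑ i ∈ S, ((c i).1 + (c i).2) := by
  have hmin (i : Fin k) : min (c i).1 (c i).2 = 0 := by grind [hc i]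
  simp [freeCoins, freeCount, hmin]

/-- The buckets outside `S` are locked: there are at most `B` free coins, whereas each of these
buckets has at least `B + 2` coins of one orientation. -/
structure IsLocked (S : Finset (Fin k)) (B : ℕ) (c : CBConfig k) : Prop where
  freeCoins_le : freeCoins S c ≤ B
  le_max : ∀ i ∉ S, B + 2 ≤ max (c i).1 (c i).2

theorem IsLocked.addCoin_of_lt (h : IsLocked S B c) (hfree : freeCoins S c < B) (j : Fin k)
    (σ : Bool) : IsLocked S B (addCoin c j σ) where
  freeCoins_le := (freeCoins_addCoin_le S c j σ).trans hfree
  le_max i hi := by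
    obtain rfl | hij := eq_or_ne i j
    · rw [addCoin_same]
      exact (h.le_max i hi).trans (max_le_max_insertCoin (c i) σ)
    · rw [addCoin_of_ne hij]
      exact h.le_max i hi

theorem IsLocked.min_add_two_le_max (h : IsLocked S B c) {i : Fin k} (hi : i ∉ S) :
    min (c i).1 (c i).2 + 2 ≤ max (c i).1 (c i).2 := by
  have hmin := min_le_freeCount S i (c i)
  have hcount := freeCount_le_freeCoins S c i
  have hfree := h.freeCoins_le
  have hmax := h.le_max i hi
  omega

theorem IsLocked.min_max_insertCoin_eq {j : Fin k} (h : IsLocked S B (addCoin d j σ))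
    (hσ : IsAdmissible (d j) σ) (hj : j ∉ S) :
    min (insertCoin (d j) σ).1 (insertCoin (d j) σ).2 = min (d j).1 (d j).2 + 1 ∧
      max (insertCoin (d j) σ).1 (insertCoin (d j) σ).2 = max (d j).1 (d j).2 :=
  hσ.min_max_insertCoin_eq (addCoin_same d j σ ▸ h.min_add_two_le_max hj)

theorem IsLocked.freeCoins_lt_of_addCoin {j : Fin k} (h : IsLocked S B (addCoin d j σ))
    (hσ : IsAdmissible (d j) σ) : freeCoins S d < B := by
  have hcount : freeCount S j (insertCoin (d j) σ) = freeCount S j (d j) + 1 := by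
    by_cases hj : j ∈ S
    · simp only [freeCount, hj, if_true, fst_add_snd_insertCoin]
    · simp only [freeCount, hj, if_false, (h.min_max_insertCoin_eq hσ hj).1]
  have hsum := freeCoins_addCoin_add S d j σ
  have hfree := h.freeCoins_le
  omega

theorem IsLocked.of_addCoin {j : Fin k} (h : IsLocked S B (addCoin d j σ))
    (hσ : IsAdmissible (d j) σ) : IsLocked S B d where
  freeCoins_le := (h.freeCoins_lt_of_addCoin hσ).le
  le_max i hi := by
    have hmax := h.le_max i hi
    obtain rfl | hij := eq_or_ne i j
    · rwa [addCoin_same, (h.min_max_insertCoin_eq hσ hi).2] at hmax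
    · rwa [addCoin_of_ne hij] at hmax

theorem IsLocked.of_cbMove {c c' : CBConfig k} (h : IsLocked S B c') (hmove : CBMove c c') :
    IsLocked S B c := by
  obtain ⟨d, i, σ, j, τ, hτ, rfl, rfl⟩ := exists_addCoin_of_cbMove hmove
  exact (h.of_addCoin hτ).addCoin_of_lt (h.freeCoins_lt_of_addCoin hτ) i σ

theorem IsLocked.of_reflTransGen {c c' : CBConfig k} (h : IsLocked S B c')
    (hmoves : Relation.ReflTransGen CBMove c c') : IsLocked S B c := by
  induction hmoves with
  | refl => exact h
  | tail _ hmove ih => exact ih (h.of_cbMove hmove)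

theorem exists_isLocked_of_cbOriented (hc : CBOriented c) (hnum : 2 ^ k ≤ numCoins c) :
    ∃ (S : Finset (Fin k)) (B : ℕ), (∃ i, i ∉ S) ∧ IsLocked S B c := by
  obtain ⟨S, hS, hlarge⟩ :=
    exists_ssubset_sum_add_two_le (s := univ) (a := fun i ↦ (c i).1 + (c i).2)
      (by simpa [numCoins] using hnum)
  obtain ⟨i, -, hi⟩ := exists_of_ssubset hS
  refine ⟨S, _, ⟨i, hi⟩, (freeCoins_of_cbOriented hc S).le, fun i hi ↦ ?_⟩
  have hsize : max (c i).1 (c i).2 = (c i).1 + (c i).2 := by grind [hc i]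
  exact hsize ▸ hlarge i (mem_univ i) hi

theorem numCoins_cbInit (hk : 1 ≤ k) (n : ℕ) : numCoins (cbInit k n) = n := by
  obtain ⟨m, rfl⟩ := Nat.exists_eq_add_of_le' hk
  simp [numCoins, cbInit, Fin.sum_univ_succ, Nat.add_sub_cancel' (Nat.div_le_self n 2)]

theorem max_cbInit_le_sum_min (k n : ℕ) (i : Fin k) :
    max (cbInit k n i).1 (cbInit k n i).2 ≤
      ∑ j, min (cbInit k n j).1 (cbInit k n j).2 + 1 :=
  calc
    max (cbInit k n i).1 (cbInit k n i).2 ≤ min (cbInit k n i).1 (cbInit k n i).2 + 1 := by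
      grind [cbInit]
    _ ≤ ∑ j, min (cbInit k n j).1 (cbInit k n j).2 + 1 := by
      gcongr
      exact single_le_sum_of_canonicallyOrdered
        (f := fun j ↦ min (cbInit k n j).1 (cbInit k n j).2) (mem_univ i)

end CBConfig

open CBConfig

theorem cbInit_unorientable_general {k : ℕ} {c : CBConfig k} (hnum : 2 ^ k ≤ numCoins c)
    (hmax : ∀ i, max (c i).1 (c i).2 ≤ ∑ j, min (c j).1 (c j).2 + 1) : ¬ CBOrientable c := by
  rintro ⟨c', hmoves, hc'⟩
  rw [numCoins_eq_of_reflTransGen hmoves] at hnum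
  obtain ⟨S, B, ⟨i, hi⟩, hlocked'⟩ := exists_isLocked_of_cbOriented hc' hnum
  have hlocked : IsLocked S B c := hlocked'.of_reflTransGen hmoves
  have : B + 2 ≤ B + 1 :=
    calc
      B + 2 ≤ max (c i).1 (c i).2 := hlocked.le_max i hi
      _ ≤ ∑ j, min (c j).1 (c j).2 + 1 := hmax i
      _ ≤ freeCoins S c + 1 := by gcongr; exact sum_min_le_freeCoins S c
      _ ≤ B + 1 := by gcongr; exact hlocked.freeCoins_le
  omega

/-- If `n ≥ 2^k` then the coin-and-bucket configuration `c_{k,n}` is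
unorientable: no finite sequence of legal moves reaches an oriented
configuration. -/
theorem cbInit_unorientable (k n : ℕ) (hk : 1 ≤ k) (hn : 1 ≤ n)
    (h : 2 ^ k ≤ n) : ¬ CBOrientable (cbInit k n) :=
  cbInit_unorientable_general (by rwa [numCoins_cbInit hk]) (max_cbInit_le_sum_min k n)
end
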